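/- Suppose each c_j is strictly increasing on T_j (regularity) and let p* : T → ℝ^m be any measurable allocation such that at every t ∈ T: if max_{i} W_i(t) > 0 then p*_k(t) = 1 for some maximizer k of i ↦ W_i(t) and p*_i(t) = 0 for all i ≠ k, while if max_i W_i(t) ≤ 0 then p*_i(t) = 0 for all i. Then: (a) p* satisfies fraction feasibility (FF); (b) for each j, the interim allocation p̃*_j(τ) = ∫_{T_{−j}} (∑_{i∈S_j} p*_i(τ, t_{−j})) f_{−j}(t_{−j}) dt_{−j} is monotone increasing on T_j; and (c) for every measurable p : T → ℝ^m satisfying FF, ∫_T ∑_{i=1}^m W_i(t) p*_i(t) f(t) dt ≥ ∫_T ∑_{i=1}^m W_i(t) p_i(t) f(t) dt. (Proposition 2.) -/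

import Mathlib

open MeasureTheory Finset

noncomputable section Caching

/-- The joint type space T = ∏_j [a_j, ā_j]. -/
def Tspace {n : ℕ} (a abar : Fin n → ℝ) : Set (Fin n → ℝ) :=
  Set.univ.pi fun j => Set.Icc (a j) (abar j)

/-- The joint density f(t) = ∏_j f_j(t_j). -/
def jointDens {n : ℕ} (f : Fin n → ℝ → ℝ) (t : Fin n → ℝ) : ℝ :=
  ∏ j, f j (t j)

/-- Interim allocation p̃_j(τ) = ∫_{T_{−j}} (∑_{i∈S_j} p_i(τ, t_{−j})) f_{−j}(t_{−j}) dt_{−j},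
written as an integral over the whole type space against the joint density
(the coordinate j integrates out since f_j is a probability density). -/
def interimAlloc {n m : ℕ} (a abar : Fin n → ℝ) (f : Fin n → ℝ → ℝ)
    (S : Fin n → Finset (Fin m)) (p : (Fin n → ℝ) → Fin m → ℝ)
    (j : Fin n) (τ : ℝ) : ℝ :=
  ∫ t in Tspace a abar, (∑ i ∈ S j, p (Function.update t j τ) i) * jointDens f t

/-- Interim payment x̃_j(τ) = ∫_{T_{−j}} x_j(τ, t_{−j}) f_{−j}(t_{−j}) dt_{−j}. -/
def interimPay {n : ℕ} (a abar : Fin n → ℝ) (f : Fin n → ℝ → ℝ)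
    (x : (Fin n → ℝ) → Fin n → ℝ) (j : Fin n) (τ : ℝ) : ℝ :=
  ∫ t in Tspace a abar, x (Function.update t j τ) j * jointDens f t

/-- Truthful interim utility ṽ_j(t) = θ t p̃_j(t) − x̃_j(t). -/
def vtld {n m : ℕ} (θ : ℝ) (a abar : Fin n → ℝ) (f : Fin n → ℝ → ℝ)
    (S : Fin n → Finset (Fin m)) (p : (Fin n → ℝ) → Fin m → ℝ)
    (x : (Fin n → ℝ) → Fin n → ℝ) (j : Fin n) (t : ℝ) : ℝ :=
  θ * t * interimAlloc a abar f S p j t - interimPay a abar f x j t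

/-- The virtual valuation c_j(t) = t − (1 − F_j(t))/f_j(t). -/
def virtVal {n : ℕ} (a : Fin n → ℝ) (f : Fin n → ℝ → ℝ) (j : Fin n) (t : ℝ) : ℝ :=
  t - (1 - ∫ τ in (a j)..t, f j τ) / f j t

/-- The virtual welfare of content i at type profile t:
W_i(t) = ∑_{s ∈ Ω_i} (θ c_s(t_s) − h(θ)) − r_i, where Ω_i = {j : i ∈ S_j}. -/
def virtWelfare {n m : ℕ} (θ hval : ℝ) (r : Fin m → ℝ)
    (S : Fin n → Finset (Fin m)) (c : Fin n → ℝ → ℝ)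
    (i : Fin m) (t : Fin n → ℝ) : ℝ :=
  (∑ s ∈ Finset.univ.filter fun j => i ∈ S j, (θ * c s (t s) - hval)) - r i

/-!
Both the optimality and the monotonicity of `p*` hold pointwise in the type profile. A
fraction-feasible vector `q` satisfies `∑ i, w i * q i ≤ max (0, max_i w i)`, and `p*` attains this
bound. Raising the type of user `j` strictly raises the welfare of every content in `S j` and leaves
the others unchanged, so a winner in `S j` can only be displaced by another content in `S j`.
Integrating the two inequalities against the nonnegative joint density gives the theorem.
-/

section Pointwise

variable {ι : Type*}

/-- Fraction feasibility (FF) of an allocation at a single type profile. -/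
def IsFractionFeasible [Fintype ι] (q : ι → ℝ) : Prop :=
  (∀ i, 0 ≤ q i) ∧ ∑ i, q i ≤ 1

/-- The allocation `q` gives everything to one content of maximal welfare `w` if that maximum is
positive, and nothing at all if no welfare is positive. This is the rule defining `p*`, at a
single type profile. -/
def IsGreedyAllocation [DecidableEq ι] (w q : ι → ℝ) : Prop :=
  ((∀ i, w i ≤ 0) ∧ q = 0) ∨ ∃ k, 0 < w k ∧ (∀ i, w i ≤ w k) ∧ q = Pi.single k 1

theorem eq_piSingle_iff [DecidableEq ι] {M : Type*} [Zero M] {q : ι → M} {k : ι} {x : M} :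
    q = Pi.single k x ↔ q k = x ∧ ∀ i, i ≠ k → q i = 0 :=
  Function.eq_update_iff

theorem isGreedyAllocation_iff [DecidableEq ι] {w q : ι → ℝ} :
    IsGreedyAllocation w q ↔
      ((∃ i, 0 < w i) → ∃ k, (∀ i, w i ≤ w k) ∧ q k = 1 ∧ ∀ i, i ≠ k → q i = 0) ∧
        ((∀ i, w i ≤ 0) → ∀ i, q i = 0) := by
  simp only [← eq_piSingle_iff]
  constructor
  · rintro (⟨hw, rfl⟩ | ⟨k, hk, hmax, hq⟩)
    · exact ⟨fun ⟨i, hi⟩ => absurd hi (hw i).not_gt, fun _ _ => rfl⟩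
    · exact ⟨fun _ => ⟨k, hmax, hq⟩, fun hw => absurd hk (hw k).not_gt⟩
  · rintro ⟨hpos, hnonpos⟩
    by_cases hw : ∃ i, 0 < w i
    · obtain ⟨k, hmax, hq⟩ := hpos hw
      obtain ⟨i, hi⟩ := hw
      exact Or.inr ⟨k, hi.trans_le (hmax i), hmax, hq⟩
    · push Not at hw
      exact Or.inl ⟨hw, funext (hnonpos hw)⟩

theorem IsFractionFeasible.norm_sum_le_one [Fintype ι] {q : ι → ℝ} (hq : IsFractionFeasible q)
    (A : Finset ι) : ‖∑ i ∈ A, q i‖ ≤ 1 := by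
  rw [Real.norm_of_nonneg (sum_nonneg fun i _ => hq.1 i)]
  exact (sum_le_univ_sum_of_nonneg hq.1).trans hq.2

variable [DecidableEq ι]

theorem IsGreedyAllocation.nonneg {w q : ι → ℝ} (hq : IsGreedyAllocation w q) : 0 ≤ q := by
  rcases hq with ⟨-, rfl⟩ | ⟨k, -, -, rfl⟩
  · exact le_rfl
  · exact Pi.single_nonneg.2 zero_le_one

theorem IsGreedyAllocation.isFractionFeasible [Fintype ι] {w q : ι → ℝ}
    (hq : IsGreedyAllocation w q) : IsFractionFeasible q := by
  refine ⟨hq.nonneg, ?_⟩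
  rcases hq with ⟨-, rfl⟩ | ⟨k, -, -, rfl⟩ <;> simp

theorem IsGreedyAllocation.sum_mul_le [Fintype ι] {w q q' : ι → ℝ}
    (hq : IsGreedyAllocation w q) (hq' : IsFractionFeasible q') :
    ∑ i, w i * q' i ≤ ∑ i, w i * q i := by
  rcases hq with ⟨hw, rfl⟩ | ⟨k, hk, hmax, rfl⟩
  · simpa using sum_nonpos fun i _ => mul_nonpos_of_nonpos_of_nonneg (hw i) (hq'.1 i)
  · calc ∑ i, w i * q' i
        ≤ ∑ i, w k * q' i := by gcongr with i; exacts [hq'.1 i, hmax i]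
      _ = w k * ∑ i, q' i := (mul_sum ..).symm
      _ ≤ w k := mul_le_of_le_one_right hk.le hq'.2
      _ = ∑ i, w i * (Pi.single k 1 : ι → ℝ) i := by simp [Pi.single_apply]

theorem IsGreedyAllocation.sum_eq_one_of_raise {w w' q' : ι → ℝ} {A : Finset ι} {k : ι}
    (hq' : IsGreedyAllocation w' q') (hA : ∀ i ∈ A, w i < w' i) (hAc : ∀ i ∉ A, w' i ≤ w i)
    (hkA : k ∈ A) (hk : 0 < w k) (hmax : ∀ i, w i ≤ w k) : ∑ i ∈ A, q' i = 1 := by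
  have hraise : w k < w' k := hA k hkA
  rcases hq' with ⟨hw', -⟩ | ⟨l, -, hmax', rfl⟩
  · exact absurd (hk.trans hraise) (hw' k).not_gt
  · have hlA : l ∈ A := by
      by_contra hlA
      have : w' l < w' l :=
        calc w' l ≤ w l := hAc l hlA
          _ ≤ w k := hmax l
          _ < w' k := hraise
          _ ≤ w' l := hmax' k
      exact this.false
    simp [hlA]

theorem IsGreedyAllocation.sum_le_sum_of_raise {w w' q q' : ι → ℝ} {A : Finset ι}
    (hq : IsGreedyAllocation w q) (hq' : IsGreedyAllocation w' q')
    (hA : ∀ i ∈ A, w i < w' i) (hAc : ∀ i ∉ A, w' i ≤ w i) :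
    ∑ i ∈ A, q i ≤ ∑ i ∈ A, q' i := by
  have hq'_nonneg : 0 ≤ ∑ i ∈ A, q' i := sum_nonneg fun i _ => hq'.nonneg i
  rcases hq with ⟨-, rfl⟩ | ⟨k, hk, hmax, rfl⟩
  · simpa using hq'_nonneg
  · by_cases hkA : k ∈ A
    · simp [hkA, hq'.sum_eq_one_of_raise hA hAc hkA hk hmax]
    · simpa [hkA] using hq'_nonneg

end Pointwise

section Integration

variable {α ι : Type*} [Fintype ι] [MeasurableSpace α] {μ : Measure α} {s : Set α}
  {p : α → ι → ℝ} {g : α → ℝ}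

theorem integrableOn_sum_mul_of_isFractionFeasible (hs : MeasurableSet s)
    (hg : IntegrableOn g s μ) (hpm : AEMeasurable p (μ.restrict s))
    (hp : ∀ x ∈ s, IsFractionFeasible (p x)) (A : Finset ι) :
    IntegrableOn (fun x => (∑ i ∈ A, p x i) * g x) s μ := by
  refine hg.bdd_mul (c := 1) (AEMeasurable.aestronglyMeasurable (by fun_prop)) ?_
  filter_upwards [ae_restrict_mem hs] with x hx
  exact (hp x hx).norm_sum_le_one A

theorem integrableOn_welfare_of_isFractionFeasible {W : ι → α → ℝ} (hs : MeasurableSet s)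
    (hW : ∀ i, IntegrableOn (fun x => W i x * g x) s μ) (hpm : AEMeasurable p (μ.restrict s))
    (hp : ∀ x ∈ s, IsFractionFeasible (p x)) :
    IntegrableOn (fun x => (∑ i, W i x * p x i) * g x) s μ := by
  have hsplit (x : α) :
      (∑ i, W i x * p x i) * g x = ∑ i, (∑ k ∈ {i}, p x k) * (W i x * g x) := by
    simp only [sum_mul, sum_singleton]
    exact sum_congr rfl fun i _ => by ring
  simp only [hsplit]
  exact integrable_finsetSum _ fun i _ =>
    integrableOn_sum_mul_of_isFractionFeasible hs (hW i) hpm hp {i}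

theorem setIntegral_welfare_le_of_isGreedyAllocation [DecidableEq ι] {W : ι → α → ℝ}
    {pstar : α → ι → ℝ} (hs : MeasurableSet s) (hg : ∀ x ∈ s, 0 ≤ g x)
    (hW : ∀ i, IntegrableOn (fun x => W i x * g x) s μ) (hpsm : AEMeasurable pstar (μ.restrict s))
    (hps : ∀ x ∈ s, IsGreedyAllocation (fun i => W i x) (pstar x))
    (hpm : AEMeasurable p (μ.restrict s)) (hp : ∀ x ∈ s, IsFractionFeasible (p x)) :
    ∫ x in s, (∑ i, W i x * p x i) * g x ∂μ ≤ ∫ x in s, (∑ i, W i x * pstar x i) * g x ∂μ :=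
  setIntegral_mono_on (integrableOn_welfare_of_isFractionFeasible hs hW hpm hp)
    (integrableOn_welfare_of_isFractionFeasible hs hW hpsm fun x hx =>
      (hps x hx).isFractionFeasible)
    hs fun x hx => mul_le_mul_of_nonneg_right ((hps x hx).sum_mul_le (hp x hx)) (hg x hx)

end Integration

section TypeSpace

variable {n m : ℕ} {a abar : Fin n → ℝ} {f : Fin n → ℝ → ℝ}

theorem measurableSet_Tspace : MeasurableSet (Tspace a abar) :=
  MeasurableSet.univ_pi fun _ => measurableSet_Icc

theorem update_mem_Tspace {t : Fin n → ℝ} (ht : t ∈ Tspace a abar) {j : Fin n} {x : ℝ}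
    (hx : x ∈ Set.Icc (a j) (abar j)) : Function.update t j x ∈ Tspace a abar :=
  (Set.update_mem_pi_iff_of_mem ht).2 fun _ => hx

theorem jointDens_nonneg (hf : ∀ j, ∀ x ∈ Set.Icc (a j) (abar j), 0 ≤ f j x) {t : Fin n → ℝ}
    (ht : t ∈ Tspace a abar) : 0 ≤ jointDens f t :=
  prod_nonneg fun j _ => hf j _ (ht j (Set.mem_univ j))

theorem integrableOn_jointDens (hf : ∀ j, IntegrableOn (f j) (Set.Icc (a j) (abar j))) :
    IntegrableOn (jointDens f) (Tspace a abar) := by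
  rw [IntegrableOn, Tspace, volume_pi, Measure.restrict_pi_pi]
  exact Integrable.fintype_prod hf

variable {θ hval : ℝ} {r : Fin m → ℝ} {S : Fin n → Finset (Fin m)} {c : Fin n → ℝ → ℝ}
  {i : Fin m} {j : Fin n} {x y : ℝ}

theorem virtWelfare_update_lt_update (hθ : 0 < θ) (hi : i ∈ S j) (hc : c j x < c j y)
    (t : Fin n → ℝ) :
    virtWelfare θ hval r S c i (Function.update t j x) <
      virtWelfare θ hval r S c i (Function.update t j y) := by
  refine sub_lt_sub_right (sum_lt_sum (fun s _ => ?_) ⟨j, by simp [hi], by simpa [hθ]⟩) _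
  rcases eq_or_ne s j with rfl | hsj
  · simpa [hθ] using hc.le
  · simp [hsj]

theorem virtWelfare_update_of_notMem (hi : i ∉ S j) (t : Fin n → ℝ) (x : ℝ) :
    virtWelfare θ hval r S c i (Function.update t j x) = virtWelfare θ hval r S c i t := by
  refine congrArg (· - r i) (sum_congr rfl fun s hs => ?_)
  have hsj : s ≠ j := by
    rintro rfl
    exact hi (mem_filter.1 hs).2
  rw [Function.update_of_ne hsj]

theorem integrableOn_interimAlloc_integrand {p : (Fin n → ℝ) → Fin m → ℝ}
    (hf : ∀ j, IntegrableOn (f j) (Set.Icc (a j) (abar j))) (hpm : Measurable p)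
    (hp : ∀ t ∈ Tspace a abar, IsFractionFeasible (p t)) (hx : x ∈ Set.Icc (a j) (abar j)) :
    IntegrableOn (fun t => (∑ i ∈ S j, p (Function.update t j x) i) * jointDens f t)
      (Tspace a abar) :=
  integrableOn_sum_mul_of_isFractionFeasible measurableSet_Tspace (integrableOn_jointDens hf)
    (hpm.comp measurable_update_left).aemeasurable
    (fun _ ht => hp _ (update_mem_Tspace ht hx)) (S j)

theorem monotoneOn_interimAlloc_of_isGreedyAllocation {pstar : (Fin n → ℝ) → Fin m → ℝ}
    (hθ : 0 < θ) (hf_nonneg : ∀ j, ∀ x ∈ Set.Icc (a j) (abar j), 0 ≤ f j x)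
    (hf_int : ∀ j, IntegrableOn (f j) (Set.Icc (a j) (abar j)))
    (hc : StrictMonoOn (c j) (Set.Icc (a j) (abar j))) (hpsm : Measurable pstar)
    (hps : ∀ t ∈ Tspace a abar,
      IsGreedyAllocation (fun i => virtWelfare θ hval r S c i t) (pstar t)) :
    MonotoneOn (interimAlloc a abar f S pstar j) (Set.Icc (a j) (abar j)) := by
  intro x hx y hy hxy
  rcases hxy.eq_or_lt with rfl | hxy
  · exact le_rfl
  have hint {z : ℝ} (hz : z ∈ Set.Icc (a j) (abar j)) :
      IntegrableOn (fun t => (∑ i ∈ S j, pstar (Function.update t j z) i) * jointDens f t)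
        (Tspace a abar) :=
    integrableOn_interimAlloc_integrand hf_int hpsm (fun t ht => (hps t ht).isFractionFeasible) hz
  refine setIntegral_mono_on (hint hx) (hint hy) measurableSet_Tspace fun t ht =>
    mul_le_mul_of_nonneg_right ?_ (jointDens_nonneg hf_nonneg ht)
  refine (hps _ (update_mem_Tspace ht hx)).sum_le_sum_of_raise (hps _ (update_mem_Tspace ht hy))
    (fun i hi => virtWelfare_update_lt_update hθ hi (hc hx hy hxy) t) fun i hi => le_of_eq ?_
  rw [virtWelfare_update_of_notMem hi, virtWelfare_update_of_notMem hi]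

end TypeSpace

theorem stmt_11_general {n m : ℕ} {θ hval : ℝ} (hθ : 0 < θ) {r : Fin m → ℝ}
    {a abar : Fin n → ℝ} {f : Fin n → ℝ → ℝ}
    (hf_nonneg : ∀ j, ∀ x ∈ Set.Icc (a j) (abar j), 0 ≤ f j x)
    (hf_prob : ∀ j, ∫ x in Set.Icc (a j) (abar j), f j x = 1)
    {S : Fin n → Finset (Fin m)} {c : Fin n → ℝ → ℝ}
    (hc : ∀ j, StrictMonoOn (c j) (Set.Icc (a j) (abar j)))
    {pstar : (Fin n → ℝ) → Fin m → ℝ} (hpsm : Measurable pstar)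
    (hps : ∀ t ∈ Tspace a abar,
      IsGreedyAllocation (fun i => virtWelfare θ hval r S c i t) (pstar t))
    (hW : ∀ i, IntegrableOn (fun t => virtWelfare θ hval r S c i t * jointDens f t)
      (Tspace a abar)) :
    (∀ t ∈ Tspace a abar, IsFractionFeasible (pstar t)) ∧
      (∀ j, MonotoneOn (interimAlloc a abar f S pstar j) (Set.Icc (a j) (abar j))) ∧
      ∀ p : (Fin n → ℝ) → Fin m → ℝ, Measurable p →
        (∀ t ∈ Tspace a abar, IsFractionFeasible (p t)) →
        ∫ t in Tspace a abar, (∑ i, virtWelfare θ hval r S c i t * p t i) * jointDens f t ≤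
          ∫ t in Tspace a abar, (∑ i, virtWelfare θ hval r S c i t * pstar t i) * jointDens f t :=
  have hf_int (j : Fin n) : IntegrableOn (f j) (Set.Icc (a j) (abar j)) :=
    integrable_of_integral_eq_one (hf_prob j)
  ⟨fun t ht => (hps t ht).isFractionFeasible,
    fun j => monotoneOn_interimAlloc_of_isGreedyAllocation hθ hf_nonneg hf_int (hc j) hpsm hps,
    fun _ hpm hp => setIntegral_welfare_le_of_isGreedyAllocation measurableSet_Tspace
      (fun _ ht => jointDens_nonneg hf_nonneg ht) hW hpsm.aemeasurable hps
      hpm.aemeasurable hp⟩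

/-- Proposition 2: under regularity, the virtual-welfare-maximizing allocation p*
(a) is fraction feasible, (b) has monotone increasing interim allocations, and
(c) maximizes the expected virtual welfare ∫_T ∑_i W_i(t) p_i(t) f(t) dt over
all measurable fraction-feasible allocations p. -/
theorem stmt_11 {n m : ℕ} (θ hval : ℝ) (hθ : 0 < θ) (hh : 0 ≤ hval)
    (r : Fin m → ℝ) (a abar : Fin n → ℝ) (hab : ∀ j, a j < abar j)
    (f : Fin n → ℝ → ℝ)
    (hfmeas : ∀ j, Measurable (f j))
    (hfpos : ∀ j, ∀ t ∈ Set.Icc (a j) (abar j), 0 < f j t)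
    (hfprob : ∀ j, ∫ t in Set.Icc (a j) (abar j), f j t = 1)
    (S : Fin n → Finset (Fin m))
    -- regularity: each virtual valuation is (strictly) increasing
    (hreg : ∀ j, StrictMonoOn (virtVal a f j) (Set.Icc (a j) (abar j)))
    (pstar : (Fin n → ℝ) → Fin m → ℝ) (hpsmeas : Measurable pstar)
    (hp1 : ∀ t ∈ Tspace a abar,
        (∃ i, 0 < virtWelfare θ hval r S (virtVal a f) i t) →
        ∃ k, (∀ i, virtWelfare θ hval r S (virtVal a f) i t
              ≤ virtWelfare θ hval r S (virtVal a f) k t) ∧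
          pstar t k = 1 ∧ ∀ i, i ≠ k → pstar t i = 0)
    (hp2 : ∀ t ∈ Tspace a abar,
        (∀ i, virtWelfare θ hval r S (virtVal a f) i t ≤ 0) → ∀ i, pstar t i = 0)
    (hWint : ∀ i, IntegrableOn
        (fun t => virtWelfare θ hval r S (virtVal a f) i t * jointDens f t)
        (Tspace a abar)) :
    -- (a) fraction feasibility of p*
    (∀ t ∈ Tspace a abar, (∀ i, 0 ≤ pstar t i) ∧ ∑ i, pstar t i ≤ 1) ∧
    -- (b) monotone interim allocations
    (∀ j, MonotoneOn (interimAlloc a abar f S pstar j) (Set.Icc (a j) (abar j))) ∧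
    -- (c) optimality among fraction-feasible allocations
    (∀ p : (Fin n → ℝ) → Fin m → ℝ, Measurable p →
      (∀ t ∈ Tspace a abar, (∀ i, 0 ≤ p t i) ∧ ∑ i, p t i ≤ 1) →
      (∫ t in Tspace a abar,
          (∑ i, virtWelfare θ hval r S (virtVal a f) i t * p t i) * jointDens f t)
        ≤ ∫ t in Tspace a abar,
            (∑ i, virtWelfare θ hval r S (virtVal a f) i t * pstar t i)
              * jointDens f t) :=
  stmt_11_general hθ (fun j x hx => (hfpos j x hx).le) hfprob hreg hpsmeas
    (fun t ht => isGreedyAllocation_iff.2 ⟨hp1 t ht, hp2 t ht⟩) hWint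

end Caching
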